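/- Under the CFL-type condition Δt/h^α ≤ 1/(2 ε C_α (1 + 1/α − ζ(α−1))), the third-order TVD Runge-Kutta time discretization of the semi-discrete natural scheme satisfies the discrete maximum principle: if M ≥ 0 and 0 ≤ P^0_j ≤ M for all j ∈ ℤ (with P^0_j = 0 for |j| ≥ J), then for every n ≥ 0 and every j ∈ ℤ one has 0 ≤ P^n_j ≤ M, where P^{n+1} = (1/3)P^n + (2/3)U^{(2)} + (2/3)Δt R(U^{(2)}), U^{(2)} = (3/4)P^n + (1/4)U^{(1)} + (1/4)Δt R(U^{(1)}), U^{(1)} = P^n + Δt R(P^n). -/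

import Mathlib

open scoped BigOperators

/-- The constant `C_α = α Γ((1+α)/2) / (2^{1-α} √π Γ(1-α/2))`. -/
noncomputable def Cconst (α : ℝ) : ℝ :=
  α * Real.Gamma ((1 + α) / 2) /
    ((2 : ℝ) ^ (1 - α) * Real.sqrt Real.pi * Real.Gamma (1 - α / 2))

/-- The real value of the Riemann zeta function at a real argument. -/
noncomputable def zetaR (s : ℝ) : ℝ := (riemannZeta (s : ℂ)).re

/-- The double-primed sum `Σ''_{k=a, k≠0}^{b} g(k)`: the sum over integers `a ≤ k ≤ b`,
omitting `k = 0`, where the end terms `k = a` and `k = b` carry weight `1/2`. -/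
noncomputable def dsum (a b : ℤ) (g : ℤ → ℝ) : ℝ :=
  ∑ k ∈ (Finset.Icc a b).erase 0, (if k = a ∨ k = b then (1 : ℝ) / 2 else 1) * g k

/-- The semi-discrete operator `R` for the natural condition. -/
noncomputable def Rnat (α ε h : ℝ) (J : ℤ) (U : ℤ → ℝ) : ℤ → ℝ := fun j =>
  if |j| < J then
    -(ε * Cconst α * zetaR (α - 1) * h ^ (-α)) * (U (j - 1) - 2 * U j + U (j + 1))
      + ε * Cconst α * h *
          dsum (-J - j) (J - j) (fun k => (U (j + k) - U j) / |(k : ℝ) * h| ^ (1 + α))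
  else 0
/-!
A forward Euler step replaces `U j` by a combination of the values of `U` whose coefficients sum
to `1`; the coefficient of every `U (j + k)`, `k ≠ 0`, is a nonnegative jump rate times
`Δt ε C_α / h ^ α`, because `ζ ≤ 0` on `(-1, 1)`. The jump rates add up to less than
`2 (ζ(1 + α) - ζ(α - 1))`, so the CFL condition makes the coefficient of `U j` nonnegative as well.
Euler steps therefore preserve every convex set of values, and so does the Runge-Kutta step, which
is a convex combination of Euler steps. Both zeta bounds, the sign on `(0, 1)` and
`ζ(1 + α) ≤ 1 + 1 / α`, are read off from
`ζ(s) = s / (s - 1) - s ∫₁^∞ {t} t ^ (-s - 1) dt`, valid for `0 < re s`; the functional equation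
carries the sign over to `(-1, 0)`.
-/

open Set MeasureTheory Filter Asymptotics

section ConvexStep

variable {𝕜 E ι : Type*} [Field 𝕜] [LinearOrder 𝕜] [IsStrictOrderedRing 𝕜]
  [AddCommGroup E] [Module 𝕜 E] {K : Set E}

theorem add_sum_smul_sub_mem_of_convex (hK : Convex 𝕜 K) {x : E} (hx : x ∈ K) {s : Finset ι}
    {w : ι → 𝕜} {y : ι → E} (hw : ∀ i ∈ s, 0 ≤ w i) (hw_sum : ∑ i ∈ s, w i ≤ 1)
    (hy : ∀ i ∈ s, y i ∈ K) : x + ∑ i ∈ s, w i • (y i - x) ∈ K := by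
  have hmem := hK.sum_mem (t := s.insertNone)
    (w := fun o => o.elim (1 - ∑ i ∈ s, w i) w) (z := fun o => o.elim x y)
    (Finset.forall_mem_insertNone.2 ⟨sub_nonneg.2 hw_sum, hw⟩) (by simp)
    (Finset.forall_mem_insertNone.2 ⟨hx, hy⟩)
  convert! hmem using 1
  simp only [Finset.sum_insertNone, Option.elim, smul_sub, Finset.sum_sub_distrib,
    ← Finset.sum_smul]
  module

/-- One forward Euler step of size `τ` for the equation `u' = L u`. -/
def forwardEulerStep (τ : 𝕜) (L : E → E) (u : E) : E := u + τ • L u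

/-- One step of the third-order TVD Runge-Kutta method for `u' = L u`, in Shu-Osher form: each
stage averages `u` with a forward Euler step from the preceding stage. -/
def tvdRK3Step (τ : 𝕜) (L : E → E) (u : E) : E :=
  (1 / 3 : 𝕜) • u + (2 / 3 : 𝕜) • forwardEulerStep τ L
    ((3 / 4 : 𝕜) • u + (1 / 4 : 𝕜) • forwardEulerStep τ L (forwardEulerStep τ L u))

theorem mapsTo_tvdRK3Step_of_forwardEulerStep (hK : Convex 𝕜 K) {τ : 𝕜} {L : E → E}
    (hL : MapsTo (forwardEulerStep τ L) K K) : MapsTo (tvdRK3Step τ L) K K := fun _ hu =>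
  hK hu (hL (hK hu (hL (hL hu)) (by norm_num) (by norm_num) (by norm_num)))
    (by norm_num) (by norm_num) (by norm_num)

end ConvexStep

section ZetaIntegral

/-- The fractional part function cut off to `(1, ∞)`. Its Mellin transform at `-s` converges on
all of `0 < re s`, where it continues the zeta function analytically. -/
noncomputable def fractTail : ℝ → ℂ := (Ioi 1).indicator fun t => ((Int.fract t : ℝ) : ℂ)

theorem norm_fractTail_le_one (t : ℝ) : ‖fractTail t‖ ≤ 1 := by
  refine (norm_indicator_le_norm_self _ t).trans ?_
  rw [Complex.norm_real, Real.norm_of_nonneg (Int.fract_nonneg t)]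
  exact (Int.fract_lt_one t).le

theorem measurable_fractTail : Measurable fractTail :=
  Measurable.indicator (by fun_prop) measurableSet_Ioi

theorem locallyIntegrableOn_fractTail (S : Set ℝ) : LocallyIntegrableOn fractTail S :=
  ((locallyIntegrable_const (1 : ℝ)).mono measurable_fractTail.aestronglyMeasurable
    (.of_forall fun t => by simpa using norm_fractTail_le_one t)).locallyIntegrableOn S

theorem fractTail_isBigO_atTop : fractTail =O[atTop] fun t : ℝ => t ^ (-(0 : ℝ)) :=
  .of_bound 1 (.of_forall fun t => by simpa using norm_fractTail_le_one t)

theorem fractTail_isBigO_nhdsGT_zero (b : ℝ) :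
    fractTail =O[nhdsWithin 0 (Ioi 0)] fun t : ℝ => t ^ (-b) := by
  refine .of_bound 1 ?_
  filter_upwards [mem_nhdsWithin_of_mem_nhds (Iio_mem_nhds zero_lt_one)] with t ht
  rw [fractTail, indicator_of_notMem (notMem_Ioi.2 (le_of_lt ht)), norm_zero]
  positivity

variable {s : ℂ}

theorem mellinConvergent_fractTail (hs : 0 < s.re) : MellinConvergent fractTail (-s) :=
  mellinConvergent_of_isBigO_rpow (locallyIntegrableOn_fractTail _) fractTail_isBigO_atTop
    (by simpa using hs) (fractTail_isBigO_nhdsGT_zero (-s.re - 1)) (by simp)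

theorem differentiableAt_mellin_fractTail (hs : 0 < s.re) :
    DifferentiableAt ℂ (mellin fractTail) (-s) :=
  mellin_differentiableAt_of_isBigO_rpow (locallyIntegrableOn_fractTail _) fractTail_isBigO_atTop
    (by simpa using hs) (fractTail_isBigO_nhdsGT_zero (-s.re - 1)) (by simp)

theorem cpow_smul_fractTail (a : ℂ) : (fun t : ℝ => (t : ℂ) ^ a • fractTail t) =
    (Ioi 1).indicator fun t : ℝ => (t : ℂ) ^ a * ((Int.fract t : ℝ) : ℂ) :=
  funext fun _ => (indicator_mul_right (Ioi (1 : ℝ)) (fun t : ℝ => (t : ℂ) ^ a) _).symm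

theorem mellin_fractTail (s : ℂ) : mellin fractTail s =
    ∫ t in Ioi (1 : ℝ), (t : ℂ) ^ (s - 1) * ((Int.fract t : ℝ) : ℂ) := by
  rw [mellin, cpow_smul_fractTail, setIntegral_indicator measurableSet_Ioi,
    inter_eq_right.2 (Ioi_subset_Ioi zero_le_one)]

theorem integrableOn_cpow_mul_fract (hs : 0 < s.re) :
    IntegrableOn (fun t : ℝ => (t : ℂ) ^ (-s - 1) * ((Int.fract t : ℝ) : ℂ)) (Ioi 1) := by
  have hconv := mellinConvergent_fractTail hs
  rw [MellinConvergent, cpow_smul_fractTail, integrableOn_indicator_iff measurableSet_Ioi] at hconv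
  exact hconv.mono_set (subset_inter subset_rfl (Ioi_subset_Ioi zero_le_one))

theorem riemannZeta_eq_mellin_fractTail_of_one_lt_re (hs : 1 < s.re) :
    riemannZeta s = s / (s - 1) - s * mellin fractTail (-s) := by
  -- Abel summation: the partial sums of the coefficients of `ζ` are `⌊t⌋ = t - {t}`.
  have habel : riemannZeta s =
      s * ∫ t in Ioi (1 : ℝ), ((t : ℂ) ^ (-s) - (t : ℂ) ^ (-s - 1) * ((Int.fract t : ℝ) : ℂ)) := by
    rw [← LSeries_one_eq_riemannZeta hs, LSeries_eq_mul_integral 1 zero_le_one hs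
      (LSeriesHasSum_one hs).LSeriesSummable
      (by simpa using isBigO_of_le _ (fun n : ℕ => by simp))]
    congr 1
    refine setIntegral_congr_fun measurableSet_Ioi fun t (ht : 1 < t) => ?_
    have ht_pos : 0 < t := zero_lt_one.trans ht
    have hfract : ((Int.fract t : ℝ) : ℂ) = t - (⌊t⌋₊ : ℂ) := by
      rw [Int.fract, Complex.ofReal_sub, ← natCast_floor_eq_intCast_floor ht_pos.le,
        Complex.ofReal_natCast]
    have hpow : (t : ℂ) ^ (-s) = (t : ℂ) ^ (-s - 1) * t := by
      have ht_ne : (t : ℂ) ≠ 0 := Complex.ofReal_ne_zero.2 ht_pos.ne'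
      rw [Complex.cpow_sub _ _ ht_ne, Complex.cpow_one, div_mul_cancel₀ _ ht_ne]
    simp only [Pi.one_apply, Finset.sum_const, Nat.card_Icc, add_tsub_cancel_right, nsmul_eq_mul,
      mul_one, neg_add', hfract, hpow]
    ring
  have hs_neg : (-s).re < -1 := by simpa using hs
  rw [habel, integral_sub (integrableOn_Ioi_cpow_of_lt hs_neg zero_lt_one)
    (integrableOn_cpow_mul_fract (zero_lt_one.trans hs)), ← mellin_fractTail,
    integral_Ioi_cpow_of_lt hs_neg zero_lt_one, Complex.ofReal_one, Complex.one_cpow,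
    neg_add_eq_sub, neg_div, ← div_neg, neg_sub]
  ring

theorem riemannZeta₁_eq_mellin_fractTail (hs : 0 < s.re) :
    riemannZeta₁ s = s - s * (s - 1) * mellin fractTail (-s) := by
  have hopen (c : ℝ) : IsOpen {z : ℂ | c < z.re} :=
    isOpen_lt continuous_const Complex.continuous_re
  have hright : DifferentiableOn ℂ (fun z => z - z * (z - 1) * mellin fractTail (-z))
      {z | 0 < z.re} := fun z hz => by
    have : DifferentiableAt ℂ (fun z => mellin fractTail (-z)) z :=
      (differentiableAt_mellin_fractTail hz).comp z differentiableAt_id.neg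
    exact DifferentiableAt.differentiableWithinAt (by fun_prop)
  refine (differentiable_riemannZeta₁.differentiableOn.analyticOnNhd
    (hopen 0)).eqOn_of_preconnected_of_eventuallyEq (hright.analyticOnNhd (hopen 0))
    (convex_halfSpace_re_gt 0).isPreconnected (z₀ := 2) (by simp) ?_ hs
  filter_upwards [(hopen 1).mem_nhds (show (2 : ℂ) ∈ {z : ℂ | 1 < z.re} by simp)]
    with z (hz : 1 < z.re)
  have hz_ne : z ≠ 1 := by rintro rfl; simp at hz
  have hz_sub : z - 1 ≠ 0 := sub_ne_zero.2 hz_ne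
  have hzeta := riemannZeta_eq_mellin_fractTail_of_one_lt_re hz
  rw [riemannZeta_eq_inv_sub_mul hz_ne] at hzeta
  field_simp at hzeta
  linear_combination hzeta

theorem riemannZeta_eq_integral_fract (hs : 0 < s.re) (hs' : s ≠ 1) : riemannZeta s =
    s / (s - 1) - s * ∫ t in Ioi (1 : ℝ), (t : ℂ) ^ (-s - 1) * ((Int.fract t : ℝ) : ℂ) := by
  have hs_sub : s - 1 ≠ 0 := sub_ne_zero.2 hs'
  rw [riemannZeta_eq_inv_sub_mul hs', riemannZeta₁_eq_mellin_fractTail hs, mellin_fractTail]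
  field_simp

end ZetaIntegral

section ZetaReal

variable {s : ℝ}

theorem zetaR_eq_integral_fract (hs : 0 < s) (hs' : s ≠ 1) : zetaR s =
    s / (s - 1) - s * ∫ t in Ioi (1 : ℝ), t ^ (-s - 1) * Int.fract t := by
  have hint : ∫ t in Ioi (1 : ℝ), (t : ℂ) ^ (-(s : ℂ) - 1) * ((Int.fract t : ℝ) : ℂ) =
      ((∫ t in Ioi (1 : ℝ), t ^ (-s - 1) * Int.fract t : ℝ) : ℂ) := by
    rw [← integral_complex_ofReal]
    refine setIntegral_congr_fun measurableSet_Ioi fun t (ht : 1 < t) => ?_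
    simp [Complex.ofReal_cpow (zero_lt_one.trans ht).le]
  rw [zetaR, riemannZeta_eq_integral_fract (by simpa using hs) (by exact_mod_cast hs'), hint]
  norm_cast

theorem zetaR_le_div_sub_one (hs : 0 < s) (hs' : s ≠ 1) : zetaR s ≤ s / (s - 1) := by
  rw [zetaR_eq_integral_fract hs hs']
  refine sub_le_self _ (mul_nonneg hs.le (setIntegral_nonneg measurableSet_Ioi fun t ht => ?_))
  exact mul_nonneg (Real.rpow_nonneg (zero_lt_one.trans ht).le _) (Int.fract_nonneg t)

theorem zetaR_one_sub (hs : 1 < s) : zetaR (1 - s) =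
    2 * (2 * Real.pi) ^ (-s) * Real.Gamma s * Real.cos (Real.pi * s / 2) * zetaR s := by
  have hfe := riemannZeta_one_sub (s := (s : ℂ))
    (fun n hn => by
      have : s = -(n : ℝ) := by exact_mod_cast hn
      linarith [(n.cast_nonneg : (0 : ℝ) ≤ n)])
    (by exact_mod_cast hs.ne')
  have hcoeff : 2 * (2 * (Real.pi : ℂ)) ^ (-(s : ℂ)) * Complex.Gamma s *
      Complex.cos (Real.pi * s / 2) =
      ((2 * (2 * Real.pi) ^ (-s) * Real.Gamma s * Real.cos (Real.pi * s / 2) : ℝ) : ℂ) := by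
    push_cast [Complex.Gamma_ofReal, Complex.ofReal_cpow Real.two_pi_pos.le]
    rfl
  rw [hcoeff] at hfe
  rw [zetaR, zetaR, Complex.ofReal_sub, Complex.ofReal_one, hfe, Complex.re_ofReal_mul]

theorem zetaR_nonpos_of_neg (hs : -2 ≤ s) (hs' : s < 0) : zetaR s ≤ 0 := by
  have hcos : Real.cos (Real.pi * (1 - s) / 2) ≤ 0 :=
    Real.cos_nonpos_of_pi_div_two_le_of_le (by nlinarith [Real.pi_pos]) (by nlinarith [Real.pi_pos])
  have hGamma : 0 < Real.Gamma (1 - s) := Real.Gamma_pos_of_pos (by linarith)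
  have hzeta : 0 < zetaR (1 - s) := riemannZeta_re_pos_of_one_lt (by linarith)
  rw [← sub_sub_cancel 1 s, zetaR_one_sub (by linarith)]
  exact mul_nonpos_of_nonpos_of_nonneg
    (mul_nonpos_of_nonneg_of_nonpos (by positivity) hcos) hzeta.le

theorem zetaR_nonpos (hs : -2 ≤ s) (hs' : s < 1) : zetaR s ≤ 0 := by
  rcases lt_trichotomy s 0 with hneg | rfl | hpos
  · exact zetaR_nonpos_of_neg hs hneg
  · norm_num [zetaR, riemannZeta_zero]
  · exact (zetaR_le_div_sub_one hpos hs'.ne).trans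
      (div_nonpos_of_nonneg_of_nonpos hpos.le (by linarith))

theorem zetaR_one_add_le (hs : 0 < s) : zetaR (1 + s) ≤ 1 + 1 / s := by
  convert! zetaR_le_div_sub_one (show 0 < 1 + s by linarith) (by linarith) using 1
  rw [add_sub_cancel_left, add_div, div_self hs.ne', add_comm]

theorem hasSum_natCast_rpow_neg (hs : 1 < s) : HasSum (fun n : ℕ => (n : ℝ) ^ (-s)) (zetaR s) := by
  have hsum : Summable fun n : ℕ => (n : ℝ) ^ (-s) := Real.summable_nat_rpow.2 (by linarith)
  convert! hsum.hasSum using 1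
  rw [zetaR, zeta_eq_tsum_one_div_nat_cpow (by simpa using hs), ← Complex.ofReal_re (tsum _),
    Complex.ofReal_tsum]
  congr 2 with n
  rw [Complex.ofReal_cpow n.cast_nonneg, Complex.ofReal_neg, Complex.cpow_neg, one_div,
    Complex.ofReal_natCast]

theorem hasSum_abs_intCast_rpow_neg (hs : 1 < s) :
    HasSum (fun k : ℤ => |(k : ℝ)| ^ (-s)) (2 * zetaR s) := by
  have hnat := hasSum_natCast_rpow_neg hs
  convert! HasSum.of_nat_of_neg (f := fun k : ℤ => |(k : ℝ)| ^ (-s))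
    (by simpa using hnat) (by simpa using hnat) using 1
  rw [Int.cast_zero, abs_zero, Real.zero_rpow (by linarith), sub_zero, two_mul]

end ZetaReal

section JumpRates

variable {α : ℝ}

theorem Cconst_pos (hα : 0 < α) (hα2 : α < 2) : 0 < Cconst α := by
  have hGamma : 0 < Real.Gamma (1 - α / 2) := Real.Gamma_pos_of_pos (by linarith)
  unfold Cconst
  positivity

/-- The rate, in units of `ε C_α h ^ (-α)`, at which the semi-discrete operator couples a grid
point to its `k`-th neighbour when the double-primed sum runs over `a ≤ k ≤ b`. The correction
`-ζ(α - 1)` of the second difference is attributed to `k = ±1`. -/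
noncomputable def jumpRate (α : ℝ) (a b k : ℤ) : ℝ :=
  (if k = a ∨ k = b then 1 / 2 else 1) * |(k : ℝ)| ^ (-(1 + α)) +
    if |k| = 1 then -zetaR (α - 1) else 0

theorem jumpRate_nonneg (hα : -1 ≤ α) (hα2 : α < 2) (a b k : ℤ) : 0 ≤ jumpRate α a b k := by
  have hzeta : zetaR (α - 1) ≤ 0 := zetaR_nonpos (by linarith) (by linarith)
  unfold jumpRate
  refine add_nonneg (by positivity) ?_
  split_ifs <;> linarith

theorem sum_ite_abs_eq_one {M : Type*} [AddCommMonoid M] {S : Finset ℤ} (hneg : -1 ∈ S)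
    (hpos : 1 ∈ S) (f : ℤ → M) : ∑ k ∈ S, (if |k| = 1 then f k else 0) = f (-1) + f 1 := by
  have hfilter : S.filter (|·| = 1) = {-1, 1} := by ext k; grind
  rw [← Finset.sum_filter, hfilter, Finset.sum_pair (by decide)]

theorem sum_jumpRate_le (hα : 0 < α) {a b : ℤ} (ha : a < 0) (hb : 0 < b) :
    ∑ k ∈ (Finset.Icc a b).erase 0, jumpRate α a b k ≤
      2 * (zetaR (1 + α) - zetaR (α - 1)) := by
  have hmain : ∑ k ∈ (Finset.Icc a b).erase 0,
      (if k = a ∨ k = b then (1 : ℝ) / 2 else 1) * |(k : ℝ)| ^ (-(1 + α)) ≤ 2 * zetaR (1 + α) :=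
    calc
      _ ≤ ∑ k ∈ (Finset.Icc a b).erase 0, |(k : ℝ)| ^ (-(1 + α)) :=
        Finset.sum_le_sum fun k _ =>
          mul_le_of_le_one_left (by positivity) (by split_ifs <;> norm_num)
      _ ≤ 2 * zetaR (1 + α) :=
        sum_le_hasSum _ (fun k _ => by positivity) (hasSum_abs_intCast_rpow_neg (by linarith))
  simp only [jumpRate]
  rw [Finset.sum_add_distrib, sum_ite_abs_eq_one (by grind) (by grind)]
  linarith

variable {ε h : ℝ}

theorem Rnat_eq_sum_jumpRate (hα : 0 < α) (hh : 0 < h) {J j : ℤ} (hj : |j| < J) (U : ℤ → ℝ) :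
    Rnat α ε h J U j = ε * Cconst α / h ^ α *
      ∑ k ∈ (Finset.Icc (-J - j) (J - j)).erase 0,
        jumpRate α (-J - j) (J - j) k * (U (j + k) - U j) := by
  have hj' := abs_lt.1 hj
  have hnear : ∑ k ∈ (Finset.Icc (-J - j) (J - j)).erase 0,
      (if |k| = 1 then -zetaR (α - 1) else 0) * (U (j + k) - U j) =
      -zetaR (α - 1) * (U (j - 1) - 2 * U j + U (j + 1)) := by
    simp only [ite_mul, zero_mul]
    rw [sum_ite_abs_eq_one (by grind) (by grind), ← sub_eq_add_neg]
    ring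
  have hfar : h * dsum (-J - j) (J - j) (fun k => (U (j + k) - U j) / |(k : ℝ) * h| ^ (1 + α)) =
      (∑ k ∈ (Finset.Icc (-J - j) (J - j)).erase 0, (if k = -J - j ∨ k = J - j then 1 / 2 else 1) *
        |(k : ℝ)| ^ (-(1 + α)) * (U (j + k) - U j)) / h ^ α := by
    rw [dsum, Finset.mul_sum, Finset.sum_div]
    refine Finset.sum_congr rfl fun k _ => ?_
    rw [abs_mul, abs_of_pos hh, Real.mul_rpow (abs_nonneg _) hh.le,
      Real.rpow_one_add' hh.le (by linarith), Real.rpow_neg (abs_nonneg _)]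
    field_simp
  simp only [Rnat, if_pos hj, jumpRate, add_mul, Finset.sum_add_distrib]
  rw [hnear, Real.rpow_neg hh.le]
  linear_combination (ε * Cconst α) * hfar

theorem mapsTo_forwardEulerStep_Rnat {K : Set ℝ} (hK : Convex ℝ K) (hα : 0 < α) (hα2 : α < 2)
    (hε : 0 ≤ ε) (hh : 0 < h) {τ : ℝ} (hτ : 0 ≤ τ)
    (hCFL : τ / h ^ α * (2 * ε * Cconst α * (zetaR (1 + α) - zetaR (α - 1))) ≤ 1) (J : ℤ) :
    MapsTo (forwardEulerStep τ (Rnat α ε h J)) (univ.pi fun _ => K) (univ.pi fun _ => K) := by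
  intro U hU j _
  rcases lt_or_ge |j| J with hj | hj
  · have hC := Cconst_pos hα hα2
    have hstep : forwardEulerStep τ (Rnat α ε h J) U j =
        U j + ∑ k ∈ (Finset.Icc (-J - j) (J - j)).erase 0,
          (τ / h ^ α * (ε * Cconst α) * jumpRate α (-J - j) (J - j) k) • (U (j + k) - U j) := by
      simp only [forwardEulerStep, Pi.add_apply, Pi.smul_apply, Rnat_eq_sum_jumpRate hα hh hj,
        smul_eq_mul, mul_assoc, ← Finset.mul_sum]
      ring
    rw [hstep]
    refine add_sum_smul_sub_mem_of_convex hK (hU j trivial)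
      (fun k _ => mul_nonneg (by positivity) (jumpRate_nonneg (by linarith) hα2 _ _ k)) ?_
      fun k _ => hU (j + k) trivial
    have hj' := abs_lt.1 hj
    calc
      _ ≤ τ / h ^ α * (ε * Cconst α) * (2 * (zetaR (1 + α) - zetaR (α - 1))) := by
        rw [← Finset.mul_sum]
        gcongr
        exact sum_jumpRate_le hα (by linarith) (by linarith)
      _ ≤ 1 := by linarith
  · simpa [forwardEulerStep, Rnat, hj.not_gt] using hU j trivial

end JumpRates

theorem sharp_cfl_denominator_pos {α ε : ℝ} (hα : 0 < α) (hα2 : α < 2) (hε : 0 < ε) :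
    0 < 2 * ε * Cconst α * (zetaR (1 + α) - zetaR (α - 1)) := by
  have hC := Cconst_pos hα hα2
  have hpos : 0 < zetaR (1 + α) := riemannZeta_re_pos_of_one_lt (by linarith)
  have hnonpos : zetaR (α - 1) ≤ 0 := zetaR_nonpos (by linarith) (by linarith)
  have hgap : 0 < zetaR (1 + α) - zetaR (α - 1) := by linarith
  positivity

theorem cfl_bound_le_sharp_cfl_bound {α ε : ℝ} (hα : 0 < α) (hα2 : α < 2) (hε : 0 < ε) :
    1 / (2 * ε * Cconst α * (1 + 1 / α - zetaR (α - 1))) ≤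
      1 / (2 * ε * Cconst α * (zetaR (1 + α) - zetaR (α - 1))) := by
  have hC := Cconst_pos hα hα2
  have hzeta := zetaR_one_add_le hα
  exact one_div_le_one_div_of_le (sharp_cfl_denominator_pos hα hα2 hε) (by gcongr)

-- `2 (ζ(1 + α) - ζ(α - 1))` is the limit of the total jump rate as `J → ∞`, in units of
-- `ε C_α h ^ (-α)`.
theorem stmt_3_general {α ε h Δt : ℝ} {J : ℤ} {K : Set ℝ} (hK : Convex ℝ K)
    (hα : 0 < α) (hα2 : α < 2) (hε : 0 < ε) (hh : 0 < h) (hΔt : 0 ≤ Δt)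
    {P U1 U2 : ℕ → ℤ → ℝ}
    (hU1 : ∀ n j, U1 n j = P n j + Δt * Rnat α ε h J (P n) j)
    (hU2 : ∀ n j, U2 n j =
      3 / 4 * P n j + 1 / 4 * U1 n j + 1 / 4 * Δt * Rnat α ε h J (U1 n) j)
    (hP : ∀ n j, P (n + 1) j =
      1 / 3 * P n j + 2 / 3 * U2 n j + 2 / 3 * Δt * Rnat α ε h J (U2 n) j)
    (hCFL : Δt / h ^ α ≤ 1 / (2 * ε * Cconst α * (zetaR (1 + α) - zetaR (α - 1))))
    (hinit : ∀ j, P 0 j ∈ K) (n : ℕ) (j : ℤ) : P n j ∈ K := by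
  have hstep (n : ℕ) : P (n + 1) = tvdRK3Step Δt (Rnat α ε h J) (P n) := by
    have h1 : U1 n = forwardEulerStep Δt (Rnat α ε h J) (P n) := funext (hU1 n)
    have h2 : U2 n = (3 / 4 : ℝ) • P n + (1 / 4 : ℝ) • forwardEulerStep Δt (Rnat α ε h J) (U1 n) :=
      funext fun j => (hU2 n j).trans (by
        simp only [forwardEulerStep, Pi.add_apply, Pi.smul_apply, smul_eq_mul]; ring)
    rw [tvdRK3Step, ← h1, ← h2]
    exact funext fun j => (hP n j).trans (by
      simp only [forwardEulerStep, Pi.add_apply, Pi.smul_apply, smul_eq_mul]; ring)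
  have hmapsTo := mapsTo_tvdRK3Step_of_forwardEulerStep (convex_pi fun _ _ => hK)
    (mapsTo_forwardEulerStep_Rnat hK hα hα2 hε.le hh hΔt
      ((le_div_iff₀ (sharp_cfl_denominator_pos hα hα2 hε)).1 hCFL) J)
  have hmem : P n ∈ univ.pi fun _ => K := by
    induction n with
    | zero => exact fun j _ => hinit j
    | succ n ih => exact hstep n ▸ hmapsTo ih
  exact hmem j trivial

/-- Discrete maximum principle for the third-order TVD Runge-Kutta discretization of
the semi-discrete scheme with the natural condition. -/
theorem stmt_3 (α ε h Δt M : ℝ) (J : ℤ)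
    (hα : 0 < α) (hα2 : α < 2) (hε : 0 < ε) (hJ : 1 ≤ J)
    (hh : 0 < h) (hΔt : 0 < Δt)
    (P : ℕ → ℤ → ℝ) (U1 U2 : ℕ → ℤ → ℝ)
    (hbc0 : ∀ j : ℤ, J ≤ |j| → P 0 j = 0)
    (hU1 : ∀ n : ℕ, ∀ j : ℤ, U1 n j = P n j + Δt * Rnat α ε h J (P n) j)
    (hU2 : ∀ n : ℕ, ∀ j : ℤ, U2 n j =
      3 / 4 * P n j + 1 / 4 * U1 n j + 1 / 4 * Δt * Rnat α ε h J (U1 n) j)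
    (hP : ∀ n : ℕ, ∀ j : ℤ, P (n + 1) j =
      1 / 3 * P n j + 2 / 3 * U2 n j + 2 / 3 * Δt * Rnat α ε h J (U2 n) j)
    (hCFL : Δt / h ^ α ≤ 1 / (2 * ε * Cconst α * (1 + 1 / α - zetaR (α - 1))))
    (hM : 0 ≤ M)
    (hinit : ∀ j : ℤ, 0 ≤ P 0 j ∧ P 0 j ≤ M) :
    ∀ n : ℕ, ∀ j : ℤ, 0 ≤ P n j ∧ P n j ≤ M :=
  fun n j => stmt_3_general (convex_Icc 0 M) hα hα2 hε hh hΔt.le hU1 hU2 hP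
    (hCFL.trans (cfl_bound_le_sharp_cfl_bound hα hα2 hε)) hinit n j
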